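/- For every integer t ≥ 0, the number of quadruples (a, b, c, d) of integers with a² + b² + c² + d² = 5^t is exactly 2·(5^{t+1} − 1). -/

import Mathlib

/-!
Let `r n` be the number of integer quaternions of norm `n`. Up to right units there are six integer
quaternions of norm `5`, represented by `1 ± 2i`, `1 ± 2j`, `1 ± 2k`. An integer quaternion of norm
`5n` has exactly one of them as a left divisor, unless `5` divides it, when all six do. Counting in
two ways the pairs `(g, y)` with `g` among the six, `y` of norm `5n` and `g ∣ y` gives the Hecke
relation `6 r(n) = r(5n) + 5 r(n / 5)`, where `r(n / 5) = 0` if `5 ∤ n`. As `r 1 = 8`, it follows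
that `r(5 ^ t) = 8 (1 + 5 + ⋯ + 5 ^ t)`.
-/

open Finset Quaternion

section Divisibility

variable {R : Type*} [CommRing R]

theorem coe_dvd_quaternion_iff {r : R} {x : ℍ[R]} :
    (r : ℍ[R]) ∣ x ↔ r ∣ x.re ∧ r ∣ x.imI ∧ r ∣ x.imJ ∧ r ∣ x.imK := by
  constructor
  · rintro ⟨y, rfl⟩
    simp
  · rintro ⟨⟨a, ha⟩, ⟨b, hb⟩, ⟨c, hc⟩, ⟨d, hd⟩⟩
    have hx : x = r • (⟨a, b, c, d⟩ : ℍ[R]) := by ext <;> assumption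
    exact ⟨_, hx.trans (coe_mul_eq_smul r _).symm⟩

theorem coe_dvd_quaternion_mul_left {r : R} {x : ℍ[R]} (h : (r : ℍ[R]) ∣ x) (z : ℍ[R]) :
    (r : ℍ[R]) ∣ z * x := by
  obtain ⟨y, rfl⟩ := h
  exact ⟨z * y, by rw [← mul_assoc, ← coe_commutes, mul_assoc]⟩

theorem coe_normSq_dvd_star_mul {g y : ℍ[R]} (h : g ∣ y) : (↑(normSq g) : ℍ[R]) ∣ star g * y := by
  obtain ⟨x, rfl⟩ := h
  exact ⟨x, by rw [← star_mul_self, mul_assoc]⟩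

theorem dvd_of_coe_normSq_dvd_star_mul [LinearOrder R] [IsStrictOrderedRing R] {g y : ℍ[R]}
    (hg : g ≠ 0) (h : (↑(normSq g) : ℍ[R]) ∣ star g * y) : g ∣ y := by
  obtain ⟨x, hx⟩ := h
  rw [← star_mul_self, mul_assoc] at hx
  exact ⟨x, mul_left_cancel₀ (star_ne_zero.2 hg) hx⟩

theorem coe_dvd_of_isCoprime_normSq_sub {p : R} {g h y : ℍ[R]} (hg : normSq g = p)
    (hh : normSq h = p) (hgh : IsCoprime (normSq (g - h)) p) (hgy : g ∣ y) (hhy : h ∣ y) :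
    (p : ℍ[R]) ∣ y := by
  have hsub : (p : ℍ[R]) ∣ star (g - h) * y := by
    rw [star_sub, sub_mul]
    exact dvd_sub (hg ▸ coe_normSq_dvd_star_mul hgy) (hh ▸ coe_normSq_dvd_star_mul hhy)
  have hnorm : (p : ℍ[R]) ∣ ↑(normSq (g - h)) * y := by
    rw [← self_mul_star, mul_assoc]
    exact coe_dvd_quaternion_mul_left hsub (g - h)
  obtain ⟨u, v, huv⟩ := hgh
  have hy : y = u * (normSq (g - h) * y) + p * (v * y) := by
    rw [← mul_assoc, ← mul_assoc, ← add_mul, ← Quaternion.coe_mul, ← Quaternion.coe_mul,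
      ← Quaternion.coe_add, mul_comm p v, huv, Quaternion.coe_one, one_mul]
  rw [hy]
  exact dvd_add (coe_dvd_quaternion_mul_left hnorm u) (dvd_mul_right _ _)

end Divisibility

section NormSphere

/-- The integer quaternions of norm `n`, that is, the integer points of the sphere of squared radius
`n` in dimension four. The box makes it a finset and excludes no solution, as `|a| ≤ a ^ 2`
for every integer `a`. -/
noncomputable def normSphere (n : ℤ) : Finset ℍ[ℤ] :=
  {x ∈ Icc (-n, -n, -n, -n) (n, n, n, n) |
    x.1 ^ 2 + x.2.1 ^ 2 + x.2.2.1 ^ 2 + x.2.2.2 ^ 2 = n}.map (equivProd ℤ).symm.toEmbedding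

theorem mem_normSphere {n : ℤ} {x : ℍ[ℤ]} : x ∈ normSphere n ↔ normSq x = n := by
  rw [normSphere, mem_map_equiv, Equiv.symm_symm, mem_filter, normSq_def']
  refine and_iff_right_of_imp fun (h : x.re ^ 2 + x.imI ^ 2 + x.imJ ^ 2 + x.imK ^ 2 = n) ↦ ?_
  have bounds (a : ℤ) (ha : a ^ 2 ≤ n) : -n ≤ a ∧ a ≤ n :=
    ⟨by linarith [Int.le_self_sq (-a), neg_sq a], by linarith [Int.le_self_sq a]⟩
  have hre := bounds x.re (by nlinarith)
  have hI := bounds x.imI (by nlinarith)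
  have hJ := bounds x.imJ (by nlinarith)
  have hK := bounds x.imK (by nlinarith)
  exact mem_Icc.2 ⟨⟨hre.1, hI.1, hJ.1, hK.1⟩, hre.2, hI.2, hJ.2, hK.2⟩

theorem ncard_setOf_sum_four_sq_eq (n : ℤ) :
    {x : ℤ × ℤ × ℤ × ℤ | x.1 ^ 2 + x.2.1 ^ 2 + x.2.2.1 ^ 2 + x.2.2.2 ^ 2 = n}.ncard =
      #(normSphere n) := by
  rw [← Set.ncard_coe_finset, ← Set.ncard_image_of_injective _ (equivProd ℤ).symm.injective,
    Equiv.image_symm_eq_preimage]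
  congr 1
  ext x
  rw [mem_coe, mem_normSphere, normSq_def']
  rfl

theorem card_normSphere_one : #(normSphere 1) = 8 := rfl

open scoped Classical in
theorem card_filter_dvd_normSphere {g : ℍ[ℤ]} (hg : g ≠ 0) (n : ℤ) :
    #{y ∈ normSphere (normSq g * n) | g ∣ y} = #(normSphere n) := by
  have hmap : {y ∈ normSphere (normSq g * n) | g ∣ y} =
      (normSphere n).map ⟨(g * ·), mul_right_injective₀ hg⟩ := by
    ext y
    simp only [mem_filter, mem_map, Function.Embedding.coeFn_mk, mem_normSphere]
    constructor
    · rintro ⟨hy, x, rfl⟩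
      rw [map_mul] at hy
      exact ⟨x, mul_left_cancel₀ (normSq_ne_zero.2 hg) hy, rfl⟩
    · rintro ⟨x, hx, rfl⟩
      exact ⟨by rw [map_mul, hx], dvd_mul_right g x⟩
  rw [hmap, card_map]

end NormSphere

/-- `G` represents the quaternions of norm `p` up to right multiplication by units: it consists of
quaternions of norm `p`, and each quaternion whose norm is divisible by `p`, but which is not itself
divisible by `p`, has exactly one left divisor in `G`. Divisibility `g ∣ y` in the noncommutative
ring `ℍ[R]` is left divisibility, `y = g * x`. -/
structure IsNormTransversal {R : Type*} [CommRing R] (p : R) (G : Finset ℍ[R]) : Prop where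
  normSq_eq : ∀ g ∈ G, normSq g = p
  existsUnique_dvd : ∀ y : ℍ[R], p ∣ normSq y → ¬ (p : ℍ[R]) ∣ y → ∃! g, g ∈ G ∧ g ∣ y

namespace IsNormTransversal

open scoped Classical in
theorem card_filter_dvd {R : Type*} [CommRing R] {p : R} {G : Finset ℍ[R]}
    (hG : IsNormTransversal p G) {y : ℍ[R]} (hy : p ∣ normSq y) :
    #{g ∈ G | g ∣ y} = if (p : ℍ[R]) ∣ y then #G else 1 := by
  split_ifs with hpy
  · have hdvd : ∀ g ∈ G, g ∣ y := fun g hg ↦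
      (Dvd.intro (star g) (by rw [self_mul_star, hG.normSq_eq g hg])).trans hpy
    rw [filter_true_of_mem hdvd]
  · rw [card_eq_one_iff_existsUnique]
    simpa only [mem_filter] using hG.existsUnique_dvd y hy hpy

variable {p : ℤ} {G : Finset ℍ[ℤ]}

open scoped Classical in
theorem card_mul_card_normSphere_add (hG : IsNormTransversal p G) (hp : p ≠ 0) (n : ℤ) :
    #G * #(normSphere n) + #{y ∈ normSphere (p * n) | Quaternion.coe p ∣ y} =
      #(normSphere (p * n)) + #G * #{y ∈ normSphere (p * n) | Quaternion.coe p ∣ y} := by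
  have hfibre : ∀ g ∈ G, #{y ∈ normSphere (p * n) | g ∣ y} = #(normSphere n) := fun g hg ↦ by
    have hgp := hG.normSq_eq g hg
    rw [← hgp] at hp ⊢
    exact card_filter_dvd_normSphere (normSq_ne_zero.1 hp) n
  have hdivisors : ∀ y ∈ normSphere (p * n),
      #{g ∈ G | g ∣ y} = if Quaternion.coe p ∣ y then #G else 1 := fun y hy ↦
    hG.card_filter_dvd (mem_normSphere.1 hy ▸ dvd_mul_right p n)
  have hcount : #G * #(normSphere n) =
      #{y ∈ normSphere (p * n) | Quaternion.coe p ∣ y} * #G +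
        #{y ∈ normSphere (p * n) | ¬ Quaternion.coe p ∣ y} :=
    calc #G * #(normSphere n) = ∑ g ∈ G, #{y ∈ normSphere (p * n) | g ∣ y} := by
          rw [sum_congr rfl hfibre, sum_const, smul_eq_mul]
      _ = ∑ y ∈ normSphere (p * n), #{g ∈ G | g ∣ y} :=
          sum_card_bipartiteAbove_eq_sum_card_bipartiteBelow (· ∣ ·)
      _ = _ := by
          rw [sum_congr rfl hdivisors, sum_ite, sum_const, smul_eq_mul, ← card_eq_sum_ones]
  rw [hcount, ← card_filter_add_card_filter_not (s := normSphere (p * n)) (Quaternion.coe p ∣ ·)]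
  ring

theorem card_normSphere_mul_of_not_dvd (hG : IsNormTransversal p G) (hp : p ≠ 0) {m : ℤ}
    (hm : ¬ p ∣ m) : #(normSphere (p * m)) = #G * #(normSphere m) := by
  classical
  have hempty : {y ∈ normSphere (p * m) | Quaternion.coe p ∣ y} = ∅ := by
    refine filter_eq_empty_iff.2 fun y hy hpy ↦ hm ?_
    have hsq : p * p ∣ p * m := by
      simpa only [normSq_coe, mem_normSphere.1 hy, sq] using map_dvd normSq hpy
    exact (mul_dvd_mul_iff_left hp).1 hsq
  simpa only [hempty, card_empty, mul_zero, add_zero, eq_comm] using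
    hG.card_mul_card_normSphere_add hp m

theorem card_normSphere_mul_mul (hG : IsNormTransversal p G) (hp : p ≠ 0) (n : ℤ) :
    #(normSphere (p * (p * n))) + #G * #(normSphere n) =
      #G * #(normSphere (p * n)) + #(normSphere n) := by
  classical
  have hmultiples : #{y ∈ normSphere (p * (p * n)) | Quaternion.coe p ∣ y} = #(normSphere n) := by
    rw [← mul_assoc, ← sq, ← normSq_coe]
    refine card_filter_dvd_normSphere (normSq_ne_zero.1 ?_) n
    rw [normSq_coe]
    exact pow_ne_zero 2 hp
  simpa only [hmultiples, eq_comm] using hG.card_mul_card_normSphere_add hp (p * n)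

theorem card_normSphere_pow_mul (hG : IsNormTransversal p G) (hp : p ≠ 0) {q : ℕ}
    (hq : #G = q + 1) {m : ℤ} (hm : ¬ p ∣ m) (t : ℕ) :
    #(normSphere (p ^ t * m)) = (∑ i ∈ range (t + 1), q ^ i) * #(normSphere m) := by
  induction t using Nat.twoStepInduction with
  | zero => simp
  | one => rw [pow_one, hG.card_normSphere_mul_of_not_dvd hp hm, hq, geom_sum_two]
  | more t ih₀ ih₁ =>
    have hrec := hG.card_normSphere_mul_mul hp (p ^ t * m)
    rw [← mul_assoc p (p ^ t), ← pow_succ', ← mul_assoc, ← pow_succ', ih₀, ih₁, hq,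
      sum_range_succ _ (t + 1)] at hrec
    rw [sum_range_succ _ (t + 2), sum_range_succ _ (t + 1)]
    linear_combination hrec

end IsNormTransversal

section Five

/-- The quaternions `1 ± 2i`, `1 ± 2j`, `1 ± 2k`, which represent the integer quaternions of norm
`5` up to right multiplication by units. -/
def primesOverFive : Finset ℍ[ℤ] :=
  Finset.map (equivProd ℤ).symm.toEmbedding
    {(1, 2, 0, 0), (1, -2, 0, 0), (1, 0, 2, 0), (1, 0, -2, 0), (1, 0, 0, 2), (1, 0, 0, -2)}

theorem card_primesOverFive : #primesOverFive = 6 := rfl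

theorem normSq_of_mem_primesOverFive : ∀ g ∈ primesOverFive, normSq g = 5 := by decide

theorem isCoprime_normSq_sub_of_mem_primesOverFive {g h : ℍ[ℤ]} (hg : g ∈ primesOverFive)
    (hh : h ∈ primesOverFive) (hne : g ≠ h) : IsCoprime (normSq (g - h)) 5 := by
  have hgcd : ∀ g ∈ primesOverFive, ∀ h ∈ primesOverFive,
      equivProd ℤ g ≠ equivProd ℤ h → Int.gcd (normSq (g - h)) 5 = 1 := by
    decide
  exact Int.isCoprime_iff_gcd_eq_one.2 (hgcd g hg h hh ((equivProd ℤ).injective.ne hne))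

-- As `2 ^ 2 = -1` in `ZMod 5`, the relation `b = ± 2 * a` means `a ^ 2 + b ^ 2 = 0`.
theorem zmod_five_pairs_of_sum_four_sq_eq_zero : ∀ a b c d : ZMod 5,
    a ^ 2 + b ^ 2 + c ^ 2 + d ^ 2 = 0 →
    (b = 2 * a ∧ d = 2 * c) ∨ (b = -2 * a ∧ d = -2 * c) ∨
    (c = 2 * a ∧ b = 2 * d) ∨ (c = -2 * a ∧ b = -2 * d) ∨
    (d = 2 * a ∧ c = 2 * b) ∨ (d = -2 * a ∧ c = -2 * b) := by
  decide +kernel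

theorem five_dvd_pairs_of_dvd_sum_four_sq {a b c d : ℤ} (h : 5 ∣ a ^ 2 + b ^ 2 + c ^ 2 + d ^ 2) :
    (5 ∣ 2 * a - b ∧ 5 ∣ 2 * c - d) ∨ (5 ∣ -2 * a - b ∧ 5 ∣ -2 * c - d) ∨
    (5 ∣ 2 * a - c ∧ 5 ∣ 2 * d - b) ∨ (5 ∣ -2 * a - c ∧ 5 ∣ -2 * d - b) ∨
    (5 ∣ 2 * a - d ∧ 5 ∣ 2 * b - c) ∨ (5 ∣ -2 * a - d ∧ 5 ∣ -2 * b - c) := by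
  have hsum : (a : ZMod 5) ^ 2 + b ^ 2 + c ^ 2 + d ^ 2 = 0 := by
    exact_mod_cast (ZMod.intCast_zmod_eq_zero_iff_dvd _ 5).2 h
  have cast_eq_iff (u v : ℤ) : (u : ZMod 5) = v ↔ 5 ∣ v - u :=
    ZMod.intCast_eq_intCast_iff_dvd_sub u v 5
  simp only [← cast_eq_iff]
  exact_mod_cast zmod_five_pairs_of_sum_four_sq_eq_zero a b c d hsum

theorem dvd_of_mem_primesOverFive {g y : ℍ[ℤ]} (hg : g ∈ primesOverFive)
    (h : Quaternion.coe 5 ∣ star g * y) : g ∣ y := by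
  have hnorm := normSq_of_mem_primesOverFive g hg
  refine dvd_of_coe_normSq_dvd_star_mul (normSq_ne_zero.1 ?_) (hnorm ▸ h)
  exact hnorm ▸ by decide

theorem exists_mem_primesOverFive_dvd {y : ℍ[ℤ]} (hy : 5 ∣ normSq y) :
    ∃ g ∈ primesOverFive, g ∣ y := by
  suffices ∃ u v w : ℤ, (equivProd ℤ).symm (1, u, v, w) ∈ primesOverFive ∧
      5 ∣ y.re + u * y.imI + v * y.imJ + w * y.imK ∧
      5 ∣ y.imI - u * y.re - v * y.imK + w * y.imJ ∧
      5 ∣ y.imJ + u * y.imK - v * y.re - w * y.imI ∧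
      5 ∣ y.imK - u * y.imJ + v * y.imI - w * y.re by
    obtain ⟨u, v, w, hmem, hdvd⟩ := this
    refine ⟨_, hmem, dvd_of_mem_primesOverFive hmem ?_⟩
    simpa [coe_dvd_quaternion_iff, sub_eq_add_neg] using hdvd
  rw [normSq_def'] at hy
  rcases five_dvd_pairs_of_dvd_sum_four_sq hy with h | h | h | h | h | h
  · exact ⟨2, 0, 0, mem_map_of_mem _ (by decide), by omega⟩
  · exact ⟨-2, 0, 0, mem_map_of_mem _ (by decide), by omega⟩
  · exact ⟨0, 2, 0, mem_map_of_mem _ (by decide), by omega⟩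
  · exact ⟨0, -2, 0, mem_map_of_mem _ (by decide), by omega⟩
  · exact ⟨0, 0, 2, mem_map_of_mem _ (by decide), by omega⟩
  · exact ⟨0, 0, -2, mem_map_of_mem _ (by decide), by omega⟩

theorem isNormTransversal_primesOverFive : IsNormTransversal 5 primesOverFive where
  normSq_eq := normSq_of_mem_primesOverFive
  existsUnique_dvd y hy hy5 := by
    obtain ⟨g, hg, hgy⟩ := exists_mem_primesOverFive_dvd hy
    refine ⟨g, ⟨hg, hgy⟩, fun h ⟨hh, hhy⟩ ↦ ?_⟩
    by_contra hne
    exact hy5 (coe_dvd_of_isCoprime_normSq_sub (normSq_of_mem_primesOverFive h hh)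
      (normSq_of_mem_primesOverFive g hg)
      (isCoprime_normSq_sub_of_mem_primesOverFive hh hg hne) hhy hgy)

end Five

theorem stmt9 (t : ℕ) :
    {x : ℤ × ℤ × ℤ × ℤ |
        x.1 ^ 2 + x.2.1 ^ 2 + x.2.2.1 ^ 2 + x.2.2.2 ^ 2 = 5 ^ t}.ncard
      = 2 * (5 ^ (t + 1) - 1) := by
  have hcount : #(normSphere (5 ^ t)) = (∑ i ∈ range (t + 1), 5 ^ i) * 8 := by
    have h := isNormTransversal_primesOverFive.card_normSphere_pow_mul (by decide)
      card_primesOverFive (m := 1) (by decide) t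
    rwa [mul_one, card_normSphere_one] at h
  have hgeom : (∑ i ∈ range (t + 1), 5 ^ i) * 4 = 5 ^ (t + 1) - 1 :=
    geom_sum_mul_of_one_le (by decide) (t + 1)
  rw [ncard_setOf_sum_four_sq_eq, hcount, ← hgeom]
  ring
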